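/- For every d ∈ ℕ there is a constant C_d > 0 such that: if α ∈ (0,1/2], ρ ∈ (0,1], and E ⊆ ℝ^d is a mean (α,ρ)-porous set, then the Hausdorff dimension of E satisfies dim_H(E) ≤ d − C_d·ρ·α^d. -/

import Mathlib

open MeasureTheory Filter Metric Set
open scoped Classical

/-- `por(E,x,r)`: the supremum of `α ≥ 0` such that some ball `B(y,αr)` is contained in
`B(x,r) \ E`. -/
noncomputable def porSet {X : Type*} [MetricSpace X] (E : Set X) (x : X) (r : ℝ) : ℝ :=
  sSup {α : ℝ | 0 ≤ α ∧ ∃ y, Metric.ball y (α * r) ⊆ Metric.ball x r \ E}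

/-- `E` is mean `(α,ρ)`-porous: at every point of `E` the lower asymptotic proportion of
scales `i` with `por(E,x,2^{-i}) ≥ α` is at least `ρ`. -/
def IsMeanPorousSet {X : Type*} [MetricSpace X] (E : Set X) (α ρ : ℝ) : Prop :=
  ∀ x ∈ E,
    ρ ≤ Filter.liminf (fun n : ℕ =>
      (((Finset.range n).filter fun i => α ≤ porSet E x ((2 : ℝ) ^ (-(i : ℤ)))).card : ℝ) / n)
      Filter.atTop

/-!
The proof counts the dyadic cubes of a fine generation `n + m` that meet `E`, where `2 ^ m` is
comparable to `d / α`. If the ball at scale `2⁻ⁱ` about a point has a hole of relative size `α`,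
then in one of `2 ^ d` translated dyadic grids the cube of generation `i` at that point contains
the centre of the hole, so one of its `(2 ^ d) ^ m` descendants of generation `i + m` misses `E`.

Weight each fine cube by `1 + η` for every one of its ancestors with such a hole, where
`η ≈ α ^ d`. Losing one descendant among `(2 ^ d) ^ m` compensates the factor `1 + η`, even though
the hole is only used up `m` generations below and several ancestors may share it, so the total
weight is at most the number of all fine cubes. Points where a proportion `ρ` of the scales is
porous lie in cubes of weight at least `(1 + η) ^ (ρ n / 2 ^ d)` in one of the grids, so they are
covered by a proportion `(1 + η) ^ (-ρ n / 2 ^ d)` of the cubes, which gains `η ρ / 2 ^ d` in the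
dimension.
-/

/-- A rootless forest on `I` in which every node has a parent and exactly `D` children. Levels are
not part of the data: a node is located by its height above a given set of leaves. -/
structure RegularForest (I : Type*) (D : ℕ) where
  parent : I → I
  children : I → Finset I
  mem_children : ∀ k l, l ∈ children k ↔ parent l = k
  card_children : ∀ k, (children k).card = D

namespace RegularForest

variable {I : Type*} {D : ℕ} (T : RegularForest I D) (L : Set I) (m : ℕ)

/-- The nodes `r` generations below a node. -/
noncomputable def descendants : ℕ → I → Finset I
  | 0, k => {k}
  | r + 1, k => (T.children k).biUnion (descendants r)

/-- A node `k` at height `h` above the leaf set `L` has a hole at depth `m` if some descendant of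
`k` exactly `m` generations below has no descendant in `L`. -/
def HasHole (h : ℕ) (k : I) : Prop :=
  ∃ i k', i + m = h ∧ T.parent^[m] k' = k ∧ ∀ l ∈ L, T.parent^[i] l ≠ k'

/-- The number of ancestors of the leaf `l` at heights `1, …, r` that have a hole at depth `m`. -/
noncomputable def holeCount (r : ℕ) (l : I) : ℕ :=
  Nat.count (fun h => T.HasHole L m (h + 1) (T.parent^[h + 1] l)) r

/-- The number of leaves below a node `k` at height `r`, each leaf being counted with a factor
`1 + η` for every ancestor up to `k` that has a hole. -/
noncomputable def weightedCount (η : ℝ) (r : ℕ) (k : I) : ℝ :=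
  ∑ l ∈ T.descendants r k with l ∈ L, (1 + η) ^ T.holeCount L m r l

/-- The leaves of weight at least `b` below the nodes of `K` at height `r`, the weight being that
of `weightedCount`. -/
noncomputable def heavyLeaves (η b : ℝ) (K : Finset I) (r : ℕ) : Finset I :=
  {l ∈ K.biUnion (T.descendants r) | l ∈ L ∧ b ≤ (1 + η) ^ T.holeCount L m r l}

variable {L m}

lemma mem_descendants {r : ℕ} {k l : I} : l ∈ T.descendants r k ↔ T.parent^[r] l = k := by
  induction r generalizing k with
  | zero => simp [descendants]
  | succ r ih =>
    simp [descendants, ih, mem_children, Function.iterate_succ_apply']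

lemma pairwiseDisjoint_descendants (K : Set I) (r : ℕ) : K.PairwiseDisjoint (T.descendants r) :=
  fun _ _ _ _ hne => Finset.disjoint_left.2 fun _ hl hl' =>
    hne ((T.mem_descendants.1 hl).symm.trans (T.mem_descendants.1 hl'))

lemma sum_biUnion_descendants (K : Finset I) (r : ℕ) (f : I → ℝ) :
    ∑ l ∈ K.biUnion (T.descendants r) with l ∈ L, f l =
      ∑ k ∈ K, ∑ l ∈ T.descendants r k with l ∈ L, f l := by
  rw [Finset.filter_biUnion, Finset.sum_biUnion]
  exact (T.pairwiseDisjoint_descendants K r).mono fun _ => Finset.filter_subset _ _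

lemma weightedCount_zero_le_one (η : ℝ) (k : I) : T.weightedCount L m η 0 k ≤ 1 := by
  have hcount (l : I) : T.holeCount L m 0 l = 0 := Nat.count_zero _
  by_cases hk : k ∈ L <;>
    simp [weightedCount, descendants, hcount, Finset.filter_singleton, hk]

lemma weightedCount_eq_zero {r : ℕ} {k : I} (hk : ∀ l ∈ L, T.parent^[r] l ≠ k) (η : ℝ) :
    T.weightedCount L m η r k = 0 := by
  rw [weightedCount, Finset.filter_false_of_mem, Finset.sum_empty]
  exact fun l hl hlL => hk l hlL (T.mem_descendants.1 hl)

lemma weightedCount_nonneg {η : ℝ} (hη : 0 ≤ η) (r : ℕ) (k : I) :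
    0 ≤ T.weightedCount L m η r k :=
  Finset.sum_nonneg fun _ _ => by positivity

lemma weightedCount_succ (η : ℝ) (r : ℕ) (k : I) :
    T.weightedCount L m η (r + 1) k =
      (if T.HasHole L m (r + 1) k then 1 + η else 1) *
        ∑ k' ∈ T.children k, T.weightedCount L m η r k' := by
  simp only [weightedCount]
  rw [← sum_biUnion_descendants, Finset.mul_sum]
  refine Finset.sum_congr rfl fun l hl => ?_
  have hlk : T.parent^[r + 1] l = k := T.mem_descendants.1 (Finset.mem_filter.1 hl).1
  rw [holeCount, Nat.count_succ, hlk, pow_add, mul_comm]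
  split_ifs <;> simp only [pow_one, pow_zero, holeCount]

lemma weightedCount_succ_le {η : ℝ} (hη : 0 ≤ η) (r : ℕ) (k : I) :
    T.weightedCount L m η (r + 1) k ≤
      (1 + η) * ∑ k' ∈ T.children k, T.weightedCount L m η r k' := by
  rw [weightedCount_succ]
  gcongr
  · exact Finset.sum_nonneg fun k' _ => T.weightedCount_nonneg hη r k'
  · split_ifs <;> linarith

lemma sum_children_weightedCount_le {η b : ℝ} {r : ℕ} (h : ∀ k, T.weightedCount L m η r k ≤ b)
    (k : I) : ∑ k' ∈ T.children k, T.weightedCount L m η r k' ≤ D * b := by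
  simpa [T.card_children] using
    Finset.sum_le_card_nsmul (T.children k) (T.weightedCount L m η r) b fun k' _ => h k'

lemma sum_siblings_weightedCount_le {η b : ℝ} {r : ℕ} (h : ∀ k, T.weightedCount L m η r k ≤ b)
    (k : I) : ∑ k' ∈ T.children (T.parent k), T.weightedCount L m η r k' ≤
      (D - 1) * b + T.weightedCount L m η r k := by
  have hk : k ∈ T.children (T.parent k) := (T.mem_children _ _).2 rfl
  have hD : 1 ≤ D := T.card_children (T.parent k) ▸ Finset.card_pos.2 ⟨k, hk⟩
  rw [← Finset.sum_erase_add _ _ hk]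
  gcongr
  simpa [Finset.card_erase_of_mem hk, T.card_children, hD] using
    Finset.sum_le_card_nsmul ((T.children (T.parent k)).erase k)
      (T.weightedCount L m η r) b fun k' _ => h k'

-- The deficit `D ^ i` left by a hole outlives the factors `1 + η` of the next `m` generations.
lemma weightedCount_ancestor_le {η : ℝ} (hD : 2 ≤ D) (hη0 : 0 ≤ η)
    (hη : 2 * η * (D : ℝ) ^ m ≤ 1) {i j : ℕ} {k : I} (hk : ∀ l ∈ L, T.parent^[i] l ≠ k)
    (hj : j ≤ m) (hle : ∀ r < i + j, ∀ k', T.weightedCount L m η r k' ≤ (D : ℝ) ^ r) :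
    T.weightedCount L m η (i + j) (T.parent^[j] k) ≤
      (1 + 2 * η) * (D : ℝ) ^ (i + j) - (D : ℝ) ^ i := by
  have hD' : (2 : ℝ) ≤ D := by exact_mod_cast hD
  induction j with
  | zero =>
    rw [add_zero, Function.iterate_zero_apply, T.weightedCount_eq_zero hk]
    nlinarith [mul_nonneg hη0 (pow_nonneg (zero_le_two.trans hD') i)]
  | succ j ih =>
    have hij : 2 * η * (D : ℝ) ^ (i + j) ≤ (D : ℝ) ^ i := by
      have : (D : ℝ) ^ j ≤ (D : ℝ) ^ m := pow_le_pow_right₀ (by linarith) (by omega)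
      calc 2 * η * (D : ℝ) ^ (i + j) = 2 * η * (D : ℝ) ^ j * (D : ℝ) ^ i := by ring
        _ ≤ 2 * η * (D : ℝ) ^ m * (D : ℝ) ^ i := by gcongr
        _ ≤ (D : ℝ) ^ i := mul_le_of_le_one_left (by positivity) hη
    have hpath := ih (by omega) fun r hr => hle r (by omega)
    rw [Function.iterate_succ_apply', ← add_assoc]
    calc T.weightedCount L m η (i + j + 1) (T.parent (T.parent^[j] k))
        ≤ (1 + η) * ((D - 1) * (D : ℝ) ^ (i + j) +
            T.weightedCount L m η (i + j) (T.parent^[j] k)) :=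
          (T.weightedCount_succ_le hη0 _ _).trans <| by
            gcongr
            exact T.sum_siblings_weightedCount_le (hle (i + j) (by omega)) _
      _ ≤ (1 + η) * ((D - 1) * (D : ℝ) ^ (i + j) +
            ((1 + 2 * η) * (D : ℝ) ^ (i + j) - (D : ℝ) ^ i)) := by gcongr
      _ ≤ (1 + 2 * η) * (D : ℝ) ^ (i + j + 1) - (D : ℝ) ^ i := by
          have hslack : 0 ≤ η * ((D - 2) * (D : ℝ) ^ (i + j) +
              ((D : ℝ) ^ i - 2 * η * (D : ℝ) ^ (i + j))) :=
            mul_nonneg hη0 (add_nonneg (mul_nonneg (by linarith) (by positivity)) (by linarith))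
          rw [pow_succ]
          linarith

theorem weightedCount_le {η : ℝ} (hD : 2 ≤ D) (hη0 : 0 ≤ η) (hη : 2 * η * (D : ℝ) ^ m ≤ 1)
    (r : ℕ) (k : I) : T.weightedCount L m η r k ≤ (D : ℝ) ^ r := by
  induction r using Nat.strong_induction_on generalizing k with
  | _ r ih =>
    rcases r with _ | r
    · simpa using T.weightedCount_zero_le_one η k
    by_cases hhole : T.HasHole L m (r + 1) k
    · obtain ⟨i, k', hi, rfl, hk'⟩ := hhole
      rw [← hi] at ih ⊢
      refine (T.weightedCount_ancestor_le hD hη0 hη hk' le_rfl ih).trans ?_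
      have : 2 * η * (D : ℝ) ^ m * (D : ℝ) ^ i ≤ (D : ℝ) ^ i :=
        mul_le_of_le_one_left (by positivity) hη
      rw [pow_add]
      linarith
    · rw [weightedCount_succ, if_neg hhole, one_mul, pow_succ']
      exact T.sum_children_weightedCount_le (ih r r.lt_succ_self) k

lemma mem_heavyLeaves {η b : ℝ} {K : Finset I} {r : ℕ} {l : I} :
    l ∈ T.heavyLeaves L m η b K r ↔
      T.parent^[r] l ∈ K ∧ l ∈ L ∧ b ≤ (1 + η) ^ T.holeCount L m r l := by
  simp [heavyLeaves, mem_descendants]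

lemma card_heavyLeaves_mul_le {η : ℝ} (hD : 2 ≤ D) (hη0 : 0 ≤ η)
    (hη : 2 * η * (D : ℝ) ^ m ≤ 1) (b : ℝ) (K : Finset I) (r : ℕ) :
    ((T.heavyLeaves L m η b K r).card : ℝ) * b ≤ K.card * (D : ℝ) ^ r := by
  rw [← nsmul_eq_mul, ← nsmul_eq_mul]
  calc (T.heavyLeaves L m η b K r).card • b
      ≤ ∑ l ∈ T.heavyLeaves L m η b K r, (1 + η) ^ T.holeCount L m r l :=
        Finset.card_nsmul_le_sum _ _ _ fun l hl => (T.mem_heavyLeaves.1 hl).2.2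
    _ ≤ ∑ l ∈ K.biUnion (T.descendants r) with l ∈ L, (1 + η) ^ T.holeCount L m r l :=
        Finset.sum_le_sum_of_subset_of_nonneg
          (Finset.monotone_filter_right _ fun _ _ hl => hl.1) fun _ _ _ => by positivity
    _ = ∑ k ∈ K, T.weightedCount L m η r k := T.sum_biUnion_descendants K r _
    _ ≤ K.card • (D : ℝ) ^ r :=
        Finset.sum_le_card_nsmul _ _ _ fun k _ => T.weightedCount_le hD hη0 hη r k

end RegularForest

section Grid

variable {ι : Type*} [Fintype ι]

variable (ι) in
/-- The dyadic cubes of `ℝ^ι`, a cube of any generation being represented by the integer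
coordinates of its lower corner in units of its side. -/
noncomputable def dyadicForest : RegularForest (ι → ℤ) (2 ^ Fintype.card ι) where
  parent k := fun j => k j / 2
  children k := Fintype.piFinset fun j => {2 * k j, 2 * k j + 1}
  mem_children k l := by
    simp only [Fintype.mem_piFinset, Finset.mem_insert, Finset.mem_singleton, funext_iff]
    exact forall_congr' fun j => by omega
  card_children k := by simp [Fintype.card_piFinset]

/-- The cube containing `x` in the generation-`g` grid of side `6 · 2⁻ᵍ`, translated by `-6 s`.
The side is taken six times the radius `2⁻ᵍ` so that `exists_gridShift` holds. -/
noncomputable def gridCell (s : ι → ℝ) (g : ℕ) (x : EuclideanSpace ℝ ι) : ι → ℤ :=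
  fun j => ⌊(2 : ℝ) ^ g * (x j / 6 + s j)⌋

variable (ι) in
/-- The translation vectors of the `2 ^ |ι|` adjacent grids (the one-third trick). -/
noncomputable def gridShifts : Finset (ι → ℝ) := Fintype.piFinset fun _ => {0, 1 / 3}

lemma card_gridShifts : (gridShifts ι).card = 2 ^ Fintype.card ι := by
  simp [gridShifts, Fintype.card_piFinset]

lemma gridShifts_nonempty : (gridShifts ι).Nonempty :=
  Finset.card_pos.1 (by simp [card_gridShifts])

lemma parent_iterate_gridCell (s : ι → ℝ) (g j : ℕ) (x : EuclideanSpace ℝ ι) :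
    (dyadicForest ι).parent^[j] (gridCell s (g + j) x) = gridCell s g x := by
  induction j with
  | zero => rfl
  | succ j ih =>
    have hparent : (dyadicForest ι).parent (gridCell s (g + j + 1) x) = gridCell s (g + j) x := by
      funext i
      have := Int.floor_div_natCast ((2 : ℝ) ^ (g + j + 1) * (x i / 6 + s i)) 2
      simp only [dyadicForest, gridCell]
      rw [← Nat.cast_ofNat (R := ℤ), ← this, Nat.cast_ofNat, pow_succ]
      ring_nf
    rw [Function.iterate_succ_apply, ← add_assoc, hparent, ih]

lemma dist_le_card_mul_of_abs_sub_le {x y : EuclideanSpace ℝ ι} {δ : ℝ}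
    (h : ∀ j, |x j - y j| ≤ δ) : dist x y ≤ Fintype.card ι * δ := by
  calc dist x y ≤ ∑ j, |x j - y j| := by
        rw [EuclideanSpace.dist_eq]
        exact Real.sqrt_le_iff.2 ⟨by positivity,
          Finset.sum_sq_le_sq_sum_of_nonneg fun j _ => abs_nonneg _⟩
    _ ≤ Fintype.card ι * δ := by
        simpa using Finset.sum_le_card_nsmul Finset.univ _ δ fun j _ => h j

lemma dist_le_of_gridCell_eq {s : ι → ℝ} {g : ℕ} {x y : EuclideanSpace ℝ ι}
    (h : gridCell s g x = gridCell s g y) : dist x y ≤ Fintype.card ι * (6 / 2 ^ g) := by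
  refine dist_le_card_mul_of_abs_sub_le fun j => ?_
  have hlt := Int.abs_sub_lt_one_of_floor_eq_floor (congrFun h j)
  rw [show (2 : ℝ) ^ g * (x j / 6 + s j) - 2 ^ g * (y j / 6 + s j) = 2 ^ g / 6 * (x j - y j) by
    ring, abs_mul, abs_of_pos (by positivity)] at hlt
  rw [le_div_iff₀ (by positivity)]
  linarith

lemma gridCell_zero_mem {s : ι → ℝ} (hs : s ∈ gridShifts ι) {R : ℕ} {x : EuclideanSpace ℝ ι}
    (hx : ‖x‖ ≤ R) :
    gridCell s 0 x ∈ Fintype.piFinset fun _ : ι => Finset.Icc (-(R : ℤ)) (R + 1) := by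
  simp only [Fintype.mem_piFinset, Finset.mem_Icc, gridCell, pow_zero, one_mul]
  intro j
  have hxj := abs_le.1 ((PiLp.norm_apply_le x j).trans hx)
  have hsj : 0 ≤ s j ∧ s j ≤ 1 := by
    rcases Finset.mem_insert.1 (Fintype.mem_piFinset.1 hs j) with h | h
    · norm_num [h]
    · norm_num [Finset.mem_singleton.1 h]
  constructor
  · exact Int.le_floor.2 (by push_cast; linarith)
  · exact Int.floor_le_iff.2 (by push_cast; linarith [R.cast_nonneg (α := ℝ)])

lemma floor_eq_of_abs_sub_lt {u v δ : ℝ} (hlow : δ ≤ Int.fract u) (hhigh : Int.fract u ≤ 1 - δ)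
    (h : |v - u| < δ) : ⌊v⌋ = ⌊u⌋ := by
  have := abs_lt.1 h
  rw [Int.floor_eq_iff]
  constructor <;> linarith [Int.self_sub_fract u]

lemma exists_two_pow_eq_three_mul_add (g : ℕ) :
    ∃ a : ℤ, (2 : ℤ) ^ g = 3 * a + 1 ∨ (2 : ℤ) ^ g = 3 * a + 2 := by
  have hdvd : ¬ (3 : ℤ) ∣ 2 ^ g := fun h => by
    have := Int.prime_three.dvd_of_dvd_pow h
    omega
  exact ⟨2 ^ g / 3, by omega⟩

lemma exists_shift_fract_mem_Icc (u : ℝ) (g : ℕ) :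
    ∃ s ∈ ({0, 1 / 3} : Finset ℝ), Int.fract (u + 2 ^ g * s) ∈ Icc (1 / 6 : ℝ) (1 - 1 / 6) := by
  by_cases hmid : Int.fract u ∈ Icc (1 / 6 : ℝ) (1 - 1 / 6)
  · exact ⟨0, by simp, by simpa using hmid⟩
  refine ⟨1 / 3, by simp, ?_⟩
  obtain ⟨a, ha⟩ := exists_two_pow_eq_three_mul_add g
  have hnear : ∃ z : ℤ, |u - z| < 1 / 6 := by
    have hfract := Int.self_sub_floor u
    rcases not_and_or.1 hmid with h | h
    · exact ⟨⌊u⌋, abs_lt.2 (by constructor <;> linarith [Int.fract_nonneg u])⟩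
    · exact ⟨⌊u⌋ + 1, abs_lt.2 (by push_cast; constructor <;> linarith [Int.fract_lt_one u])⟩
  obtain ⟨z, hz⟩ := hnear
  obtain ⟨hz1, hz2⟩ := abs_lt.1 hz
  have ha' : (2 : ℝ) ^ g = 3 * a + 1 ∨ (2 : ℝ) ^ g = 3 * a + 2 := by exact_mod_cast ha
  have hfloor : ⌊u + 2 ^ g * (1 / 3)⌋ = z + a := by
    rw [Int.floor_eq_iff]
    push_cast
    rcases ha' with h | h <;> constructor <;> linarith
  rw [← Int.self_sub_floor, hfloor]
  push_cast
  rcases ha' with h | h <;> constructor <;> linarith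

lemma exists_gridShift (g : ℕ) (x : EuclideanSpace ℝ ι) :
    ∃ s ∈ gridShifts ι, ∀ y ∈ ball x (1 / 2 ^ g), gridCell s g y = gridCell s g x := by
  choose s hs hfract using fun j => exists_shift_fract_mem_Icc (2 ^ g * (x j / 6)) g
  refine ⟨s, Fintype.mem_piFinset.2 hs, fun y hy => funext fun j => ?_⟩
  simp only [gridCell, mul_add]
  refine floor_eq_of_abs_sub_lt (hfract j).1 (hfract j).2 ?_
  have hyx : |y j - x j| < 1 / 2 ^ g := (PiLp.dist_apply_le y x j).trans_lt hy
  rw [lt_div_iff₀ (by positivity)] at hyx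
  rw [show (2 : ℝ) ^ g * (y j / 6) + 2 ^ g * s j - (2 ^ g * (x j / 6) + 2 ^ g * s j) =
    2 ^ g / 6 * (y j - x j) by ring, abs_mul, abs_of_pos (by positivity)]
  linarith

end Grid

section Porosity

variable {X : Type*} [MetricSpace X] {E : Set X} {α ρ ρ' : ℝ}

lemma exists_mem_ball_disjoint_of_lt_porSet {x : X} {r a : ℝ} (hr : 0 < r) (ha : 0 ≤ a)
    (h : a < porSet E x r) : ∃ y ∈ ball x r, Disjoint (closedBall y (a * r)) E := by
  have hne : {a : ℝ | 0 ≤ a ∧ ∃ y, ball y (a * r) ⊆ ball x r \ E}.Nonempty :=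
    ⟨0, le_rfl, x, by simp⟩
  obtain ⟨a', ⟨_, y, hy⟩, haa'⟩ := exists_lt_of_lt_csSup hne h
  refine ⟨y, (hy (mem_ball_self (mul_pos (ha.trans_lt haa') hr))).1, ?_⟩
  exact (disjoint_sdiff_left.mono_left hy).mono_left
    (closedBall_subset_ball (mul_lt_mul_of_pos_right haa' hr))

/-- The points of `E` at which the proportion of porous scales among the first `n` is at least `ρ`
for every `n ≥ N`. -/
def uniformlyPorousPart (E : Set X) (α ρ : ℝ) (N : ℕ) : Set X :=
  {x ∈ E | ∀ n ≥ N, ρ * n ≤ Nat.count (fun i : ℕ => α ≤ porSet E x (1 / 2 ^ i)) n}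

-- In `IsMeanPorousSet` the scale `i` is elaborated as an integer, hence this coercion of `range n`.
lemma card_filter_range_intCast (P : ℤ → Prop) (n : ℕ) :
    ((Finset.range n : Finset ℤ).filter P).card = Nat.count (fun i : ℕ => P i) n := by
  have himage : (Finset.range n : Finset ℤ) = (Finset.range n).image (Nat.cast : ℕ → ℤ) := by
    ext; simp [eq_comm]
  rw [himage, Finset.filter_image, Finset.card_image_of_injective _ Nat.cast_injective,
    Nat.count_eq_card_filter_range]

lemma IsMeanPorousSet.subset_iUnion_uniformlyPorousPart (h : IsMeanPorousSet E α ρ)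
    (hρ : ρ' < ρ) : E ⊆ ⋃ N, uniformlyPorousPart E α ρ' N := by
  intro x hx
  have hfreq := eventually_lt_of_lt_liminf (hρ.trans_le (h x hx))
    (isBoundedUnder_of ⟨0, fun n => by positivity⟩)
  obtain ⟨N, hN⟩ := eventually_atTop.1 hfreq
  refine mem_iUnion.2 ⟨N, hx, fun n hn => ?_⟩
  rcases n.eq_zero_or_pos with rfl | hn0
  · simp
  have hlt := (lt_div_iff₀ (Nat.cast_pos.2 hn0)).1 (hN n hn)
  rw [card_filter_range_intCast fun i => α ≤ porSet E x ((2 : ℝ) ^ (-i))] at hlt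
  simpa only [zpow_neg, zpow_natCast, one_div] using hlt.le

end Porosity

section Covering

variable {ι : Type*} [Fintype ι] {E : Set (EuclideanSpace ℝ ι)} {α ρ : ℝ} {m n : ℕ}
  {x : EuclideanSpace ℝ ι}

lemma exists_hasHole_of_le_porSet (hα : 0 < α) (hm : 12 * Fintype.card ι ≤ α * 2 ^ m) {i : ℕ}
    (hi : i ≤ n) (h : α ≤ porSet E x (1 / 2 ^ i)) :
    ∃ s ∈ gridShifts ι, (dyadicForest ι).HasHole (gridCell s (n + m) '' E) m (n - i + m)
      (gridCell s i x) := by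
  obtain ⟨y, hyx, hyE⟩ :=
    exists_mem_ball_disjoint_of_lt_porSet (by positivity) (half_pos hα).le
      ((half_lt_self hα).trans_le h)
  obtain ⟨s, hs, hsx⟩ := exists_gridShift i x
  refine ⟨s, hs, n - i, gridCell s (i + m) y, rfl, ?_, ?_⟩
  · rw [parent_iterate_gridCell, hsx y hyx]
  · rintro _ ⟨z, hz, rfl⟩ heq
    rw [show n + m = i + m + (n - i) by omega, parent_iterate_gridCell] at heq
    refine disjoint_left.1 hyE (mem_closedBall.2 ((dist_le_of_gridCell_eq heq).trans ?_)) hz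
    rw [pow_add]
    field_simp
    linarith

lemma count_porSet_le_sum_holeCount (hα : 0 < α) (hm : 12 * Fintype.card ι ≤ α * 2 ^ m) (n : ℕ)
    (x : EuclideanSpace ℝ ι) :
    Nat.count (fun i : ℕ => α ≤ porSet E x (1 / 2 ^ i)) n ≤
      ∑ s ∈ gridShifts ι, (dyadicForest ι).holeCount (gridCell s (n + m) '' E) m (n + m)
        (gridCell s (n + m) x) := by
  simp only [RegularForest.holeCount, Nat.count_eq_card_filter_range]
  refine (Finset.card_le_card (t := (gridShifts ι).biUnion fun s =>
    ((Finset.range (n + m)).filter fun h => (dyadicForest ι).HasHole (gridCell s (n + m) '' E) m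
      (h + 1) ((dyadicForest ι).parent^[h + 1] (gridCell s (n + m) x))).image
        (n + m - 1 - ·)) fun i hi => ?_).trans
    (Finset.card_biUnion_le.trans (Finset.sum_le_sum fun s _ => Finset.card_image_le))
  obtain ⟨hin, hpor⟩ := Finset.mem_filter.1 hi
  rw [Finset.mem_range] at hin
  obtain ⟨s, hs, hhole⟩ := exists_hasHole_of_le_porSet hα hm hin.le hpor
  refine Finset.mem_biUnion.2 ⟨s, hs, Finset.mem_image.2 ⟨n + m - 1 - i, ?_, by omega⟩⟩
  have hcell := parent_iterate_gridCell s i (n - i + m) x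
  rw [show i + (n - i + m) = n + m by omega] at hcell
  rw [Finset.mem_filter, show n + m - 1 - i + 1 = n - i + m by omega, hcell]
  exact ⟨Finset.mem_range.2 (by omega), hhole⟩

lemma exists_le_holeCount (hα : 0 < α) (hm : 12 * Fintype.card ι ≤ α * 2 ^ m) {N : ℕ}
    (hn : N ≤ n) (hx : x ∈ uniformlyPorousPart E α ρ N) :
    ∃ s ∈ gridShifts ι, ρ * n / 2 ^ Fintype.card ι ≤
      (dyadicForest ι).holeCount (gridCell s (n + m) '' E) m (n + m) (gridCell s (n + m) x) := by
  refine Finset.exists_le_of_sum_le gridShifts_nonempty ?_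
  calc ∑ _s ∈ gridShifts ι, ρ * n / 2 ^ Fintype.card ι = ρ * n := by
        rw [Finset.sum_const, card_gridShifts, nsmul_eq_mul]
        push_cast
        field_simp
    _ ≤ _ := (hx.2 n hn).trans (by exact_mod_cast count_porSet_le_sum_holeCount hα hm n x)

lemma two_rpow_le_one_add_pow {η κ : ℝ} (hη0 : 0 ≤ η) (hη1 : η ≤ 1) {q : ℕ} (hq : κ ≤ q) :
    (2 : ℝ) ^ (η * κ) ≤ (1 + η) ^ q := by
  have hbernoulli : (2 : ℝ) ^ η ≤ 1 + η := by
    simpa [one_add_one_eq_two] using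
      rpow_one_add_le_one_add_mul_self (s := 1) (by norm_num) hη0 hη1
  calc (2 : ℝ) ^ (η * κ) ≤ 2 ^ (η * q) :=
        Real.rpow_le_rpow_of_exponent_le one_le_two (by gcongr)
    _ = (2 ^ η) ^ q := Real.rpow_mul_natCast zero_le_two η q
    _ ≤ (1 + η) ^ q := by gcongr

lemma exists_cover_uniformlyPorousPart [Nonempty ι] (hα : 0 < α)
    (hm : 12 * Fintype.card ι ≤ α * 2 ^ m) {η : ℝ} (hη0 : 0 ≤ η)
    (hη : 2 * η * ((2 : ℝ) ^ Fintype.card ι) ^ m ≤ 1) (N R : ℕ) :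
    ∃ B : ℝ, ∀ n ≥ N, ∃ C : Finset ((ι → ℝ) × (ι → ℤ)),
      (C.card : ℝ) * 2 ^ (η * (ρ * n / 2 ^ Fintype.card ι)) ≤
        B * ((2 : ℝ) ^ Fintype.card ι) ^ (n + m) ∧
      ∀ x ∈ uniformlyPorousPart E α ρ N, ‖x‖ ≤ R → ∃ c ∈ C, gridCell c.1 (n + m) x = c.2 := by
  set box := Fintype.piFinset fun _ : ι => Finset.Icc (-(R : ℤ)) (R + 1)
  have hD : 2 ≤ 2 ^ Fintype.card ι := Nat.le_self_pow Fintype.card_ne_zero 2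
  have hη1 : η ≤ 1 := by
    have hpow : (1 : ℝ) ≤ (2 ^ Fintype.card ι) ^ m := one_le_pow₀ (one_le_pow₀ one_le_two)
    nlinarith
  refine ⟨(gridShifts ι).card * box.card, fun n hn => ?_⟩
  set b : ℝ := 2 ^ (η * (ρ * n / 2 ^ Fintype.card ι))
  set heavy : (ι → ℝ) → Finset (ι → ℤ) := fun s =>
    (dyadicForest ι).heavyLeaves (gridCell s (n + m) '' E) m η b box (n + m)
  have hheavy (s : ι → ℝ) :
      ((heavy s).card : ℝ) * b ≤ box.card * ((2 : ℝ) ^ Fintype.card ι) ^ (n + m) := by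
    simpa using (dyadicForest ι).card_heavyLeaves_mul_le hD hη0 (by simpa using hη) b box (n + m)
  refine ⟨(gridShifts ι).biUnion fun s => (heavy s).image (Prod.mk s), ?_, fun x hx hxR => ?_⟩
  · calc _ ≤ (∑ s ∈ gridShifts ι, ((heavy s).card : ℝ)) * b := by
          gcongr
          exact_mod_cast Finset.card_biUnion_le.trans
            (Finset.sum_le_sum fun s _ => Finset.card_image_le)
      _ ≤ (gridShifts ι).card • (box.card * ((2 : ℝ) ^ Fintype.card ι) ^ (n + m)) := by
          rw [Finset.sum_mul]
          exact Finset.sum_le_card_nsmul _ _ _ fun s _ => hheavy s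
      _ = _ := by rw [nsmul_eq_mul, mul_assoc]
  · obtain ⟨s, hs, hcount⟩ := exists_le_holeCount hα hm hn hx
    have hroot : (dyadicForest ι).parent^[n + m] (gridCell s (n + m) x) = gridCell s 0 x := by
      simpa using parent_iterate_gridCell s 0 (n + m) x
    have hmem : gridCell s (n + m) x ∈ heavy s :=
      (dyadicForest ι).mem_heavyLeaves.2 ⟨hroot ▸ gridCell_zero_mem hs hxR,
        mem_image_of_mem _ hx.1, two_rpow_le_one_add_pow hη0 hη1 hcount⟩
    exact ⟨(s, gridCell s (n + m) x),
      Finset.mem_biUnion.2 ⟨s, hs, Finset.mem_image_of_mem _ hmem⟩, rfl⟩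

end Covering

section Dimension

lemma dimH_le_of_card_mul_rpow_le {X : Type*} [EMetricSpace X] {S : Set X} {κ : ℕ → Type*}
    [∀ n, Fintype (κ n)] {t : ∀ n, κ n → Set X} {r : ℕ → ENNReal} {s : NNReal} {Q : ENNReal}
    (hr : Tendsto r atTop (nhds 0)) (hdiam : ∀ n i, ediam (t n i) ≤ r n)
    (hcover : ∀ᶠ n in atTop, S ⊆ ⋃ i, t n i) (hQ : Q ≠ ⊤)
    (hcard : ∀ᶠ n in atTop, Fintype.card (κ n) * r n ^ (s : ℝ) ≤ Q) : dimH S ≤ s := by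
  borelize X
  refine dimH_le_of_hausdorffMeasure_ne_top (ne_top_of_le_ne_top hQ ?_)
  calc Measure.hausdorffMeasure s S
      ≤ liminf (fun n => ∑ i, ediam (t n i) ^ (s : ℝ)) atTop :=
        Measure.hausdorffMeasure_le_liminf_sum s S r hr t (.of_forall hdiam) hcover
    _ ≤ liminf (fun _ => Q) atTop := by
        refine liminf_le_liminf (hcard.mono fun n hn => le_trans ?_ hn)
        rw [← nsmul_eq_mul]
        exact Finset.sum_le_card_nsmul _ _ _ fun i _ =>
          ENNReal.rpow_le_rpow (hdiam n i) s.coe_nonneg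
    _ = Q := liminf_const Q

variable {ι : Type*} [Fintype ι]

lemma mesh_rpow_le {d κ s : ℝ} (hd : 0 ≤ d) (hs : d - κ ≤ s) (n : ℕ) :
    (d * (6 / 2 ^ n)) ^ s ≤ 2 ^ (κ * n) * (d * 6) ^ s / ((2 : ℝ) ^ d) ^ n := by
  have hexp : -(n * s) ≤ κ * n - d * n := by nlinarith [n.cast_nonneg (α := ℝ)]
  calc (d * (6 / 2 ^ n)) ^ s = (d * 6) ^ s * 2 ^ (-(n * s)) := by
        rw [← mul_div_assoc, Real.div_rpow (by positivity) (by positivity),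
          Real.rpow_neg zero_le_two, Real.rpow_natCast_mul zero_le_two, div_eq_mul_inv]
    _ ≤ (d * 6) ^ s * 2 ^ (κ * n - d * n) := by
        gcongr
        exact one_le_two
    _ = 2 ^ (κ * n) * (d * 6) ^ s / ((2 : ℝ) ^ d) ^ n := by
        rw [Real.rpow_sub two_pos, Real.rpow_mul_natCast zero_le_two d]
        ring

lemma dimH_le_of_gridCell_cover {S : Set (EuclideanSpace ℝ ι)} {m N : ℕ} {B κ : ℝ} {s : NNReal}
    (hs : Fintype.card ι - κ ≤ s) {C : ℕ → Finset ((ι → ℝ) × (ι → ℤ))}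
    (hcard : ∀ n ≥ N, ((C n).card : ℝ) * 2 ^ (κ * n) ≤
      B * ((2 : ℝ) ^ Fintype.card ι) ^ (n + m))
    (hcover : ∀ n ≥ N, ∀ x ∈ S, ∃ c ∈ C n, gridCell c.1 (n + m) x = c.2) : dimH S ≤ s := by
  set d := Fintype.card ι
  let r (n : ℕ) : ℝ := d * (6 / 2 ^ (n + m))
  have hr (n : ℕ) : 0 ≤ r n := by positivity
  have hr_tendsto : Tendsto r atTop (nhds 0) := by
    have hpow : Tendsto (fun n => (2 : ℝ) ^ (n + m)) atTop atTop :=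
      (tendsto_pow_atTop_atTop_of_one_lt one_lt_two).comp (tendsto_add_atTop_nat m)
    simpa using (hpow.const_div_atTop 6).const_mul (d : ℝ)
  refine dimH_le_of_card_mul_rpow_le (κ := fun n => C n) (r := fun n => ENNReal.ofReal (r n))
    (t := fun n c => {x | gridCell c.1.1 (n + m) x = c.1.2})
    (Q := ENNReal.ofReal (B * 2 ^ (κ * m) * (d * 6) ^ (s : ℝ))) ?_ ?_ ?_ ENNReal.ofReal_ne_top ?_
  · simpa using ENNReal.tendsto_ofReal hr_tendsto
  · refine fun n c => ediam_le fun x hx y hy => ?_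
    rw [edist_dist]
    exact ENNReal.ofReal_le_ofReal (dist_le_of_gridCell_eq (hx.trans hy.symm))
  · filter_upwards [eventually_ge_atTop N] with n hn x hx
    obtain ⟨c, hc, hcx⟩ := hcover n hn x hx
    exact mem_iUnion.2 ⟨⟨c, hc⟩, hcx⟩
  · filter_upwards [eventually_ge_atTop N] with n hn
    rw [Fintype.card_coe, ENNReal.ofReal_rpow_of_nonneg (hr n) s.coe_nonneg,
      ← ENNReal.ofReal_natCast, ← ENNReal.ofReal_mul (Nat.cast_nonneg _)]
    refine ENNReal.ofReal_le_ofReal ?_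
    have hmesh := mesh_rpow_le (Nat.cast_nonneg d) hs (n + m)
    rw [Real.rpow_natCast, Nat.cast_add, mul_add, Real.rpow_add two_pos] at hmesh
    calc ((C n).card : ℝ) * r n ^ (s : ℝ)
        ≤ (C n).card * (2 ^ (κ * n) * 2 ^ (κ * m) * (d * 6) ^ (s : ℝ) / (2 ^ d) ^ (n + m)) := by
          gcongr
      _ = (C n).card * 2 ^ (κ * n) * (2 ^ (κ * m) * (d * 6) ^ (s : ℝ) / (2 ^ d) ^ (n + m)) := by
          ring
      _ ≤ B * (2 ^ d) ^ (n + m) * (2 ^ (κ * m) * (d * 6) ^ (s : ℝ) / (2 ^ d) ^ (n + m)) :=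
          mul_le_mul_of_nonneg_right (hcard n hn) (by positivity)
      _ = B * 2 ^ (κ * m) * (d * 6) ^ (s : ℝ) := by field_simp

theorem IsMeanPorousSet.dimH_le [Nonempty ι] {E : Set (EuclideanSpace ℝ ι)} {α ρ ρ' : ℝ} {m : ℕ}
    (hE : IsMeanPorousSet E α ρ) (hα : 0 < α) (hm : 12 * Fintype.card ι ≤ α * 2 ^ m)
    (hρ : ρ' < ρ) :
    dimH E ≤ ENNReal.ofReal (Fintype.card ι -
      ρ' / (2 * 2 ^ Fintype.card ι * (2 ^ Fintype.card ι) ^ m)) := by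
  set η : ℝ := 1 / (2 * (2 ^ Fintype.card ι) ^ m)
  have hη : 2 * η * ((2 : ℝ) ^ Fintype.card ι) ^ m ≤ 1 := le_of_eq <| by simp only [η]; field_simp
  have hbounded (N R : ℕ) : dimH (uniformlyPorousPart E α ρ' N ∩ {x | ‖x‖ ≤ R}) ≤
      ENNReal.ofReal (Fintype.card ι -
        ρ' / (2 * 2 ^ Fintype.card ι * (2 ^ Fintype.card ι) ^ m)) := by
    obtain ⟨B, hB⟩ := exists_cover_uniformlyPorousPart (E := E) (ρ := ρ') hα hm
      (by positivity) hη N R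
    choose! C hcard hcover using hB
    refine dimH_le_of_gridCell_cover (B := B) (Real.le_coe_toNNReal _) (fun n hn => ?_)
      fun n hn x hx => hcover n hn x hx.1 hx.2
    convert hcard n hn using 3
    simp only [η]
    field_simp
  have hsub : E ⊆ ⋃ N : ℕ, ⋃ R : ℕ, uniformlyPorousPart E α ρ' N ∩ {x | ‖x‖ ≤ R} := fun x hx => by
    obtain ⟨N, hN⟩ := mem_iUnion.1 (hE.subset_iUnion_uniformlyPorousPart hρ hx)
    obtain ⟨R, hR⟩ := exists_nat_ge ‖x‖
    exact mem_iUnion₂.2 ⟨N, R, hN, hR⟩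
  refine (dimH_mono hsub).trans ?_
  simp only [dimH_iUnion]
  exact iSup₂_le hbounded

end Dimension

lemma exists_two_pow_mem_Icc {x : ℝ} (hx : 1 ≤ x) : ∃ m : ℕ, (2 : ℝ) ^ m ∈ Icc x (2 * x) := by
  obtain ⟨m, hle, hlt⟩ := exists_nat_pow_near hx one_lt_two
  exact ⟨m + 1, hlt.le, by rw [pow_succ']; gcongr⟩

lemma const_mul_pow_le_div {d m : ℕ} {α ρ : ℝ} (hd : 0 < d) (hα : 0 < α) (hρ : 0 ≤ ρ)
    (hm : (2 : ℝ) ^ m ≤ 2 * (12 * d / α)) :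
    1 / (4 * (48 * d) ^ d) * ρ * α ^ d ≤ ρ / 2 / (2 * 2 ^ d * (2 ^ d) ^ m) := by
  calc 1 / (4 * (48 * d) ^ d) * ρ * α ^ d = ρ / 2 / (2 * 2 ^ d * (2 * (12 * d / α)) ^ d) := by
        rw [mul_assoc 2, ← mul_pow, show 2 * (2 * (12 * d / α)) = 48 * d / α by ring, div_pow]
        field_simp
        ring
    _ ≤ ρ / 2 / (2 * 2 ^ d * (2 ^ d) ^ m) := by
        rw [← pow_mul, mul_comm d m, pow_mul]
        gcongr

/-- For every `d` there is a constant `C_d > 0` such that every mean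
`(α,ρ)`-porous set `E ⊆ ℝ^d` (with `α ∈ (0,1/2]`, `ρ ∈ (0,1]`) has Hausdorff dimension
at most `d − C_d·ρ·α^d`. -/
theorem stmt19 (d : ℕ) (hd : 0 < d) :
    ∃ C : ℝ, 0 < C ∧ ∀ α ρ : ℝ, α ∈ Set.Ioc (0 : ℝ) (1 / 2) → ρ ∈ Set.Ioc (0 : ℝ) 1 →
      ∀ E : Set (EuclideanSpace ℝ (Fin d)), IsMeanPorousSet E α ρ →
        (dimH E : EReal) ≤ (((d : ℝ) - C * ρ * α ^ d : ℝ) : EReal) := by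
  have : Nonempty (Fin d) := ⟨⟨0, hd⟩⟩
  have hd1 : (1 : ℝ) ≤ d := by exact_mod_cast hd
  refine ⟨1 / (4 * (48 * d) ^ d), by positivity, fun α ρ ⟨hα0, hα1⟩ ⟨hρ0, hρ1⟩ E hE => ?_⟩
  obtain ⟨m, hm, hm'⟩ := exists_two_pow_mem_Icc
    (show 1 ≤ 12 * d / α by rw [le_div_iff₀ hα0]; linarith)
  have hdim := hE.dimH_le hα0 (m := m) (by simpa [mul_comm α] using (div_le_iff₀ hα0).1 hm)
    (half_lt_self hρ0)
  rw [Fintype.card_fin] at hdim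
  have hgain := const_mul_pow_le_div hd hα0 hρ0.le hm'
  have hle_one : 1 / (4 * (48 * d) ^ d) * ρ * α ^ d ≤ 1 := by
    have hC : 1 / (4 * (48 * (d : ℝ)) ^ d) ≤ 1 :=
      div_le_one_of_le₀ (by linarith [one_le_pow₀ (show 1 ≤ 48 * (d : ℝ) by linarith) (n := d)])
        (by positivity)
    exact mul_le_one₀ (mul_le_one₀ hC hρ0.le hρ1) (by positivity)
      (pow_le_one₀ hα0.le (by linarith))
  refine (EReal.coe_ennreal_le_coe_ennreal_iff.2 hdim).trans ?_
  rw [EReal.coe_ennreal_ofReal, EReal.coe_le_coe_iff]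
  exact max_le (by linarith) (by linarith)
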